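/- Let B be a local ring with maximal ideal m_B whose residue field k has at least 5 elements. Let L_B denote the R_B-submodule of \widetilde{RP}(B) generated by the elements [au] − [a] and ⟨⟨u⟩⟩C_B, for a ∈ W_B and u ∈ 1 + m_B. Then there is a short exact sequence of R_B-modules 0 → L_B → \widetilde{RP}(B) → \widetilde{RP}(k) → 0, where the right-hand map is the functorial map induced by the reduction B ↠ k. -/

import Mathlib

/-
Let `M = \widetilde{RP}(B) / L_B`, with projection `π`, and put `F_w(a) = ⟨⟨w⟩⟩π[a]` for
`w ∈ 1 + m_B`. Since `π[a]` depends only on the residue of `a`, it suffices to show that `1 + m_B`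
acts trivially on `M`, i.e. that `F_w = 0`: then `M` is a module over the group ring of `k` and
`[ā] ↦ π[a]` defines an inverse of `M → \widetilde{RP}(k)`.

Adding the five-term relations of the pairs `(a⁻¹, c)` and `(a, a c)` gives
`⟨a⟩F_w(a) = ⟨-1⟩F_w(a)`. Replacing `a` by `a u` shows that `⟨⟨u⟩⟩F_w = 0` for `u ∈ 1 + m_B`, so
`F_w` is additive in `w` and `2 F_w = 0`. A five-term relation is determined by its arguments `c`,
`e` and `d = c e`. Subtracting the relations for `(c, e)` and `(c y⁻¹, e y)` with `y ∈ 1 + m_B`, and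
comparing with the same difference after exchanging `c` and `e`, gives `F_y(e) = ⟨-1⟩F_y(c)`. Hence
`F_y` is constant, and a single five-term relation shows that the constant is zero.
-/

noncomputable section

/-- The group of square classes `R^× / (R^×)²`, denoted `G_R`. -/
def SqCl (R : Type*) [CommRing R] : Type _ :=
  Rˣ ⧸ (powMonoidHom 2 : Rˣ →* Rˣ).range

instance (R : Type*) [CommRing R] : CommGroup (SqCl R) :=
  QuotientGroup.Quotient.commGroup _

/-- The class of a unit in the group of square classes. -/
def sqc {R : Type*} [CommRing R] (u : Rˣ) : SqCl R := QuotientGroup.mk u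

/-- The group ring `κ[G_R]` of square classes, denoted `R_R` in the paper (for `κ = ℤ`;
for `κ = ℤ[1/2]` it is `R_R[1/2]`). -/
abbrev GRing (κ : Type*) [CommRing κ] (R : Type*) [CommRing R] : Type _ :=
  MonoidAlgebra κ (SqCl R)

/-- `⟨u⟩`, the square class of a unit `u` viewed in the group ring. -/
def gcl (κ : Type*) [CommRing κ] {R : Type*} [CommRing R] (u : Rˣ) : GRing κ R :=
  MonoidAlgebra.of κ (SqCl R) (sqc u)

/-- `⟨⟨u⟩⟩ := ⟨u⟩ - 1`. -/
def gcc (κ : Type*) [CommRing κ] {R : Type*} [CommRing R] (u : Rˣ) : GRing κ R :=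
  gcl κ u - 1

/-- The augmentation ideal `I_R`, generated by the elements `g - 1`, `g ∈ G_R`. -/
def augId (κ : Type*) [CommRing κ] (R : Type*) [CommRing R] : Ideal (GRing κ R) :=
  Ideal.span (Set.range fun g : SqCl R => (MonoidAlgebra.of κ (SqCl R) g - 1))

/-- `p₋₁⁺ := ⟨-1⟩ + 1`. -/
def pminus (κ : Type*) [CommRing κ] (R : Type*) [CommRing R] : GRing κ R :=
  gcl κ (-1 : Rˣ) + 1

/-- `W_R = {a ∈ R^× : 1 - a ∈ R^×}`. -/
def WU (R : Type*) [CommRing R] : Type _ := {a : Rˣ // IsUnit ((1 : R) - (a : R))}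

namespace WU

variable {R : Type*} [CommRing R]

instance : CoeHead (WU R) Rˣ := ⟨Subtype.val⟩

/-- `1 - a` as a unit, for `a ∈ W_R`. -/
def usub (a : WU R) : Rˣ := a.2.unit

@[simp] lemma usub_coe (a : WU R) : ((usub a : Rˣ) : R) = 1 - ((a : Rˣ) : R) := a.2.unit_spec

/-- `a - 1` as a unit, for `a ∈ W_R`. -/
def usub' (a : WU R) : Rˣ := -usub a

/-- `a⁻¹ - 1` as a unit, for `a ∈ W_R`. -/
def uinvsub (a : WU R) : Rˣ := (a : Rˣ)⁻¹ * usub a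

/-- `1 - a ∈ W_R` when `a ∈ W_R`. -/
def oneSub (a : WU R) : WU R :=
  ⟨usub a, by rw [usub_coe, sub_sub_cancel]; exact (a : Rˣ).isUnit⟩

/-- `a⁻¹ ∈ W_R` when `a ∈ W_R`. -/
def winv (a : WU R) : WU R := by
  refine ⟨(a : Rˣ)⁻¹, ?_⟩
  have h : (((((a : Rˣ)⁻¹ * (-usub a)) : Rˣ)) : R) = 1 - (((a : Rˣ)⁻¹ : Rˣ) : R) := by
    have h1 := Units.inv_mul (a : Rˣ)
    push_cast [usub_coe]
    linear_combination h1
  rw [← h]; exact Units.isUnit _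

/-- The image of an element of `W_A` under a ring homomorphism `A → B` carrying units to
units, as an element of `W_B`. -/
def mapRH {A B : Type*} [CommRing A] [CommRing B] (f : A →+* B) (a : WU A) : WU B :=
  ⟨Units.map (f : A →* B) (a : Aˣ), by
    have h := a.2.map f
    rw [map_sub, map_one] at h
    simpa using h⟩

end WU

/-- The free `R_R`-module on the symbols `[a]`, `a ∈ W_R`. -/
abbrev preRP (κ : Type*) [CommRing κ] (R : Type*) [CommRing R] : Type _ :=
  WU R →₀ GRing κ R

/-- The basis element `[a]` of the free module. -/
def pregen (κ : Type*) [CommRing κ] {R : Type*} [CommRing R] (a : WU R) : preRP κ R :=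
  Finsupp.single a 1

/-- The set of defining relations of `RP(R)`:  the elements
`[a] - [b] + ⟨a⟩[b/a] - ⟨a⁻¹-1⟩[(1-a⁻¹)/(1-b⁻¹)] - ⟨1-a⟩[(1-a)/(1-b)]`
whenever `a, b, a/b ∈ W_R` (here `c = b/a`, `d = (1-a⁻¹)/(1-b⁻¹)`, `e = (1-a)/(1-b)`). -/
def RPrel (κ : Type*) [CommRing κ] (R : Type*) [CommRing R] : Set (preRP κ R) :=
  { x | ∃ a b c d e : WU R,
      ((c : Rˣ) : R) * ((a : Rˣ) : R) = ((b : Rˣ) : R) ∧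
      ((d : Rˣ) : R) * (1 - (((b : Rˣ)⁻¹ : Rˣ) : R)) = 1 - (((a : Rˣ)⁻¹ : Rˣ) : R) ∧
      ((e : Rˣ) : R) * (1 - ((b : Rˣ) : R)) = 1 - ((a : Rˣ) : R) ∧
      x = pregen κ a - pregen κ b + gcl κ (a : Rˣ) • pregen κ c
          - gcl κ (WU.uinvsub a) • pregen κ d - gcl κ (WU.usub a) • pregen κ e }

/-- The submodule of relations. -/
def RPsub (κ : Type*) [CommRing κ] (R : Type*) [CommRing R] :
    Submodule (GRing κ R) (preRP κ R) :=
  Submodule.span (GRing κ R) (RPrel κ R)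

/-- The refined pre-Bloch group (refined scissors congruence group) `RP(R)`,
as a module over the group ring `R_R`. -/
abbrev RP (κ : Type*) [CommRing κ] (R : Type*) [CommRing R] : Type _ :=
  preRP κ R ⧸ RPsub κ R

/-- The generator `[a]` of `RP(R)`. -/
def rp (κ : Type*) [CommRing κ] {R : Type*} [CommRing R] (a : WU R) : RP κ R :=
  Submodule.Quotient.mk (pregen κ a)

/-- The map `λ₁ : [a] ↦ ⟨⟨a⟩⟩⟨⟨1-a⟩⟩`, defined on the free module. -/
def lamOne (κ : Type*) [CommRing κ] (R : Type*) [CommRing R] :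
    preRP κ R →ₗ[GRing κ R] GRing κ R :=
  Finsupp.linearCombination (GRing κ R)
    (fun a => gcc κ (a : Rˣ) * gcc κ (WU.usub a))

/-- The refined scissors congruence group `RP₁(R) = ker λ₁`, as a submodule of `RP(R)`. -/
def RP1 (κ : Type*) [CommRing κ] (R : Type*) [CommRing R] : Submodule (GRing κ R) (RP κ R) :=
  Submodule.map (RPsub κ R).mkQ (LinearMap.ker (lamOne κ R))

/-- `ψ₁(a) = [a] + ⟨-1⟩[a⁻¹]` for `a ∈ W_R`. -/
def psiOne (κ : Type*) [CommRing κ] {R : Type*} [CommRing R] (a : WU R) : RP κ R :=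
  rp κ a + gcl κ (-1 : Rˣ) • rp κ (WU.winv a)

/-- The submodule `K_R^{(1)}` generated by the elements `ψ₁(a)`, `a ∈ R^×`
(equivalently, by the `ψ₁(a)`, `a ∈ W_R`). -/
def Kpsi (κ : Type*) [CommRing κ] (R : Type*) [CommRing R] : Submodule (GRing κ R) (RP κ R) :=
  Submodule.span (GRing κ R) { x | ∃ a : WU R, x = psiOne κ a }

/-- `\widetilde{RP}(R) := RP(R)/K_R^{(1)}`. -/
abbrev RPt (κ : Type*) [CommRing κ] (R : Type*) [CommRing R] : Type _ :=
  RP κ R ⧸ Kpsi κ R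

/-- The generator `[a]` of `\widetilde{RP}(R)`. -/
def rpt (κ : Type*) [CommRing κ] {R : Type*} [CommRing R] (a : WU R) : RPt κ R :=
  Submodule.Quotient.mk (rp κ a)

/-- The ideal `p₋₁⁺ I_R` of the group ring. -/
def pIdeal (κ : Type*) [CommRing κ] (R : Type*) [CommRing R] : Ideal (GRing κ R) :=
  augId κ R * Ideal.span {pminus κ R}

/-- `\widetilde{RP}₁(R) = ker(λ̃₁ : \widetilde{RP}(R) → I_R²/p₋₁⁺I_R)` as a submodule
of `\widetilde{RP}(R)`. -/
def RPt1 (κ : Type*) [CommRing κ] (R : Type*) [CommRing R] :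
    Submodule (GRing κ R) (RPt κ R) :=
  Submodule.map ((Kpsi κ R).mkQ ∘ₗ (RPsub κ R).mkQ)
    (Submodule.comap (lamOne κ R) (pIdeal κ R))

/-- The expression `C_R(a) = [a] + ⟨-1⟩[1-a] + ⟨⟨1-a⟩⟩ψ₁(a)`;  the constant `C_R ∈ RP(R)` is
this element, for any (every) choice of `a ∈ W_R`. -/
def Cexpr (κ : Type*) [CommRing κ] {R : Type*} [CommRing R] (a : WU R) : RP κ R :=
  rp κ a + gcl κ (-1 : Rˣ) • rp κ (WU.oneSub a) + gcc κ (WU.usub a) • psiOne κ a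

/-- `ℤ[1/2]`, the localization of `ℤ` away from `2`. -/
abbrev Half : Type := Localization.Away (2 : ℤ)

/-- A field is *sufficiently large* if it is infinite, or finite with `p^d` elements
where `d(p-1) > 6`. -/
def SuffLarge (k : Type*) : Prop :=
  Infinite k ∨ ∃ p d : ℕ, p.Prime ∧ Nat.card k = p ^ d ∧ 6 < d * (p - 1)

/-- The map on square classes induced by a ring homomorphism. -/
def sqMapRH {A B : Type*} [CommRing A] [CommRing B] (f : A →+* B) : SqCl A →* SqCl B :=
  QuotientGroup.map _ _ (Units.map (f : A →* B))
    (by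
      rintro x ⟨y, rfl⟩
      exact ⟨Units.map (f : A →* B) y, by simp [powMonoidHom]⟩)

/-- For a module `M` over the group ring `κ[G_R]`, a group `G₀` mapping to `G_R` and a
character `χ : G₀ → {±1}`, this is the subgroup `R^χ M` generated by the elements
`g•m - χ(g)m`.  The quotient `M_χ = M/R^χM` is `M ⧸ chSub ...`. -/
def chSub (κ : Type*) [CommRing κ] {R : Type*} [CommRing R] {G₀ : Type*} [Group G₀]
    (t : G₀ →* SqCl R) (χ : G₀ →* ℤˣ)
    (M : Type*) [AddCommGroup M] [Module (GRing κ R) M] : Submodule ℤ M :=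
  Submodule.span ℤ
    {x | ∃ (g : G₀) (m : M),
      x = (MonoidAlgebra.of κ (SqCl R) (t g)) • m - ((χ g : ℤ) : ℤ) • m}

/-- The Steinberg ideal `⟨⟨⟨a⟩⟩⟨⟨1-a⟩⟩ : a ∈ W_R⟩` of the group ring. -/
def StRel (κ : Type*) [CommRing κ] (R : Type*) [CommRing R] : Ideal (GRing κ R) :=
  Ideal.span {x | ∃ a : WU R, x = gcc κ ((a : Rˣ)) * gcc κ (WU.usub a)}

/-- The Grothendieck–Witt ring `GW(R) = κ[G_R]/⟨⟨⟨a⟩⟩⟨⟨1-a⟩⟩⟩`. -/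
abbrev GWq (κ : Type*) [CommRing κ] (R : Type*) [CommRing R] : Type _ :=
  GRing κ R ⧸ StRel κ R

/-- The fundamental ideal `I(R)` of the Grothendieck–Witt ring. -/
def IfundGW (κ : Type*) [CommRing κ] (R : Type*) [CommRing R] : Ideal (GWq κ R) :=
  (augId κ R).map (Ideal.Quotient.mk (StRel κ R))

/-- The relations of the classical scissors congruence group `P(R)`:
`[a] - [b] + [b/a] - [(1-a⁻¹)/(1-b⁻¹)] + [(1-a)/(1-b)]`. -/
def PRel (κ : Type*) [CommRing κ] (R : Type*) [CommRing R] : Set (WU R →₀ κ) :=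
  { x | ∃ a b c d e : WU R,
      ((c : Rˣ) : R) * ((a : Rˣ) : R) = ((b : Rˣ) : R) ∧
      ((d : Rˣ) : R) * (1 - (((b : Rˣ)⁻¹ : Rˣ) : R)) = 1 - (((a : Rˣ)⁻¹ : Rˣ) : R) ∧
      ((e : Rˣ) : R) * (1 - ((b : Rˣ) : R)) = 1 - ((a : Rˣ) : R) ∧
      x = Finsupp.single a 1 - Finsupp.single b 1 + Finsupp.single c 1
          - Finsupp.single d 1 + Finsupp.single e 1 }

/-- The scissors congruence group (pre-Bloch group) `P(R)` of Dupont–Sah. -/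
abbrev Pgrp (κ : Type*) [CommRing κ] (R : Type*) [CommRing R] : Type _ :=
  (WU R →₀ κ) ⧸ Submodule.span κ (PRel κ R)

/-- The generator `[a]` of `P(R)`. -/
def pcl (κ : Type*) [CommRing κ] {R : Type*} [CommRing R] (a : WU R) : Pgrp κ R :=
  Submodule.Quotient.mk (Finsupp.single a 1)

/-- The subgroup `K_R` of `P(R)` generated by the elements `{a} = [a] + [a⁻¹]`. -/
def PKsub (κ : Type*) [CommRing κ] (R : Type*) [CommRing R] : Submodule κ (Pgrp κ R) :=
  Submodule.span κ {x | ∃ a : WU R, x = pcl κ a + pcl κ (WU.winv a)}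

/-- `\widetilde{P}(R) := P(R)/K_R`. -/
abbrev Ptld (κ : Type*) [CommRing κ] (R : Type*) [CommRing R] : Type _ :=
  Pgrp κ R ⧸ PKsub κ R

/-- The generator `[a]` of `\widetilde{P}(R)`. -/
def ptcl (κ : Type*) [CommRing κ] {R : Type*} [CommRing R] (a : WU R) : Ptld κ R :=
  Submodule.Quotient.mk (pcl κ a)

section GroupRing

variable {κ G H M : Type*} [CommRing κ] [Group G] [Group H] [AddCommGroup M]
  [Module (MonoidAlgebra κ G) M]

lemma smul_eq_zero_of_mapDomainRingHom_eq_zero {f : G →* H}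
    (hf : ∀ g, f g = 1 → ∀ m : M, MonoidAlgebra.of κ G g • m = m) {x : MonoidAlgebra κ G}
    (hx : MonoidAlgebra.mapDomainRingHom κ f x = 0) (m : M) : x • m = 0 := by
  let s : H → G := Function.invFun f
  have hs (g : G) : f (s (f g)) = f g := Function.invFun_eq ⟨g, rfl⟩
  have of_smul (g : G) : MonoidAlgebra.of κ G (s (f g)) • m = MonoidAlgebra.of κ G g • m := by
    have h := hf (s (f g) * g⁻¹) (by rw [map_mul, hs, map_inv, mul_inv_cancel])
      (MonoidAlgebra.of κ G g • m)
    rwa [← mul_smul, ← map_mul, inv_mul_cancel_right] at h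
  have single_eq (g : G) (c : κ) :
      MonoidAlgebra.single g c = MonoidAlgebra.single 1 c * MonoidAlgebra.of κ G g := by
    rw [MonoidAlgebra.of_apply, MonoidAlgebra.single_mul_single, one_mul, mul_one]
  have key (y : MonoidAlgebra κ G) :
      MonoidAlgebra.mapDomain s (MonoidAlgebra.mapDomainRingHom κ f y) • m = y • m := by
    induction y using MonoidAlgebra.induction_linear with
    | zero => rw [map_zero, MonoidAlgebra.mapDomain_zero]
    | add y z hy hz => rw [map_add, MonoidAlgebra.mapDomain_add, add_smul, add_smul, hy, hz]
    | single g c =>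
      rw [MonoidAlgebra.mapDomainRingHom_apply, MonoidAlgebra.mapDomain_single,
        MonoidAlgebra.mapDomain_single, single_eq, single_eq g, mul_smul, mul_smul]
      exact congrArg _ (of_smul g)
  rw [← key, hx, MonoidAlgebra.mapDomain_zero, zero_smul]

end GroupRing

section SquareClasses

variable (κ : Type*) [CommRing κ] {R : Type*} [CommRing R]

lemma gcl_one : gcl κ (1 : Rˣ) = 1 := map_one (MonoidAlgebra.of κ (SqCl R))

lemma gcl_mul (u v : Rˣ) : gcl κ (u * v) = gcl κ u * gcl κ v :=
  map_mul (MonoidAlgebra.of κ (SqCl R)) (sqc u) (sqc v)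

lemma gcl_mul_self (u : Rˣ) : gcl κ u * gcl κ u = 1 := by
  have h : sqc (u * u) = 1 := (QuotientGroup.eq_one_iff _).2 ⟨u, sq u⟩
  rw [← gcl_mul, gcl, h, map_one]

lemma gcl_inv (u : Rˣ) : gcl κ u⁻¹ = gcl κ u := by
  have h : gcl κ u⁻¹ * gcl κ u = 1 := by rw [← gcl_mul, inv_mul_cancel, gcl_one]
  linear_combination (-gcl κ u⁻¹) * gcl_mul_self κ u + gcl κ u * h

lemma gcl_uinvsub (a : WU R) : gcl κ a.uinvsub = gcl κ (a : Rˣ) * gcl κ a.usub := by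
  rw [WU.uinvsub, gcl_mul, gcl_inv]

end SquareClasses

namespace WU

variable {R A : Type*} [CommRing R] [CommRing A]

lemma ext {a b : WU R} (h : ((a : Rˣ) : R) = (b : Rˣ)) : a = b := Subtype.ext (Units.ext h)

/-- The element of `W_R` given by two units `u` and `v` with `1 - u = v`. -/
def ofUnits (u v : Rˣ) (h : (1 : R) - u = v) : WU R := ⟨u, h ▸ v.isUnit⟩

@[simp] lemma coe_ofUnits {u v : Rˣ} (h : (1 : R) - u = v) : (ofUnits u v h : Rˣ) = u := rfl

@[simp] lemma usub_ofUnits {u v : Rˣ} (h : (1 : R) - u = v) : (ofUnits u v h).usub = v :=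
  Units.ext (by rw [usub_coe, coe_ofUnits, h])

@[simp] lemma coe_winv (a : WU R) : (a.winv : Rˣ) = (a : Rˣ)⁻¹ := rfl

@[simp] lemma coe_oneSub (a : WU R) : (a.oneSub : Rˣ) = a.usub := rfl

@[simp] lemma coe_mapRH (f : R →+* A) (a : WU R) :
    (mapRH f a : Aˣ) = Units.map (f : R →* A) a := rfl

@[simp] lemma usub_oneSub (a : WU R) : a.oneSub.usub = a :=
  Units.ext (by simp)

lemma usub_winv (a : WU R) : a.winv.usub = -((a : Rˣ)⁻¹ * a.usub) :=
  Units.ext (by simp [mul_sub])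

lemma usub_mapRH (f : R →+* A) (a : WU R) :
    (mapRH f a).usub = Units.map (f : R →* A) a.usub :=
  Units.ext (by simp)

lemma mapRH_winv (f : R →+* A) (a : WU R) : mapRH f a.winv = (mapRH f a).winv := rfl

lemma mapRH_oneSub (f : R →+* A) (a : WU R) : mapRH f a.oneSub = (mapRH f a).oneSub :=
  ext (by simp)

/-- The involution `a ↦ a / (a - 1)` of `W_R`. -/
def divSubOne (a : WU R) : WU R := a.winv.oneSub.winv

lemma coe_divSubOne (a : WU R) : (a.divSubOne : Rˣ) = -(a * a.usub⁻¹) := by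
  simp [divSubOne, usub_winv, mul_comm, inv_neg]

end WU

/-- The arguments `a`, `b`, `c = b / a`, `d = (1 - a⁻¹) / (1 - b⁻¹)`, `e = (1 - a) / (1 - b)` of a
five-term relation; the formula for `d` is replaced by the equivalent `d = c e`. -/
structure FiveTerm {R : Type*} [CommRing R] (a b c d e : WU R) : Prop where
  b_eq : (b : Rˣ) = c * a
  d_eq : (d : Rˣ) = c * e
  usub_a_eq : a.usub = e * b.usub

namespace FiveTerm

variable {R A : Type*} [CommRing R] [CommRing A] {a b c d e : WU R}

lemma iff_cross_ratios : FiveTerm a b c d e ↔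
    ((c : Rˣ) : R) * ((a : Rˣ) : R) = ((b : Rˣ) : R) ∧
    ((d : Rˣ) : R) * (1 - (((b : Rˣ)⁻¹ : Rˣ) : R)) = 1 - (((a : Rˣ)⁻¹ : Rˣ) : R) ∧
    ((e : Rˣ) : R) * (1 - ((b : Rˣ) : R)) = 1 - ((a : Rˣ) : R) := by
  have hb : (1 : R) - ((b : Rˣ)⁻¹ : Rˣ) = b.winv.usub := by simp
  have ha : (1 : R) - ((a : Rˣ)⁻¹ : Rˣ) = a.winv.usub := by simp
  have key (h1 : (b : Rˣ) = c * a) (h3 : a.usub = e * b.usub) :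
      d * b.winv.usub = a.winv.usub ↔ (d : Rˣ) = c * e := by
    have h : (a : Rˣ)⁻¹ * (e * b.usub) = c * e * ((c * a : Rˣ)⁻¹ * b.usub) := by
      rw [mul_mul_mul_comm, mul_inv, mul_inv_cancel_left]
    rw [WU.usub_winv, WU.usub_winv, mul_neg, neg_inj, h1, h3, h, mul_left_inj]
  rw [ha, hb, ← WU.usub_coe, ← WU.usub_coe]
  norm_cast
  exact ⟨fun ⟨h1, h2, h3⟩ => ⟨h1.symm, (key h1 h3).2 h2, h3.symm⟩,
    fun ⟨h1, h2, h3⟩ => ⟨h1.symm, (key h1.symm h3.symm).1 h2, h3.symm⟩⟩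

lemma map (f : R →+* A) (h : FiveTerm a b c d e) :
    FiveTerm (WU.mapRH f a) (WU.mapRH f b) (WU.mapRH f c) (WU.mapRH f d) (WU.mapRH f e) where
  b_eq := by simp [h.b_eq]
  d_eq := by simp [h.d_eq]
  usub_a_eq := by simp [WU.usub_mapRH, h.usub_a_eq]

lemma ratios_unique {c' d' e' : WU R} (h : FiveTerm a b c d e) (h' : FiveTerm a b c' d' e') :
    c = c' ∧ d = d' ∧ e = e' := by
  have hc : c = c' := Subtype.ext (mul_right_cancel (h.b_eq.symm.trans h'.b_eq))
  have he : e = e' := Subtype.ext (mul_right_cancel (h.usub_a_eq.symm.trans h'.usub_a_eq))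
  exact ⟨hc, Subtype.ext (by rw [h.d_eq, h'.d_eq, hc, he]), he⟩

lemma a_mul_usub_d (h : FiveTerm a b c d e) : (a : Rˣ) * d.usub = e.usub := by
  have h1 := congrArg Units.val h.b_eq
  have h2 := congrArg Units.val h.d_eq
  have h3 := congrArg Units.val h.usub_a_eq
  ext
  push_cast [WU.usub_coe] at *
  grind

lemma usub_a_mul_usub_d (h : FiveTerm a b c d e) : a.usub * d.usub = e * c.usub := by
  have h1 := congrArg Units.val h.b_eq
  have h2 := congrArg Units.val h.d_eq
  have h3 := congrArg Units.val h.usub_a_eq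
  ext
  push_cast [WU.usub_coe] at *
  grind

lemma eq_of_ratios_eq {a' b' : WU R} (h : FiveTerm a b c d e) (h' : FiveTerm a' b' c d e) :
    a = a' ∧ b = b' := by
  have ha : a = a' := Subtype.ext (mul_right_cancel (h.a_mul_usub_d.trans h'.a_mul_usub_d.symm))
  exact ⟨ha, Subtype.ext (by rw [h.b_eq, h'.b_eq, ha])⟩

lemma winv_divSubOne {p : WU R} (h : FiveTerm a.winv c p d e) :
    FiveTerm a p c d.divSubOne e.divSubOne := by
  have h1 := h.b_eq
  have h4 := h.a_mul_usub_d
  have h5 := h.usub_a_mul_usub_d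
  rw [WU.coe_winv] at h1 h4
  rw [WU.usub_winv] at h5
  refine ⟨by rw [h1, inv_mul_cancel_right], ?_, ?_⟩
  · rw [WU.coe_divSubOne, WU.coe_divSubOne, h.d_eq, h1, ← h4, mul_neg, mul_mul_mul_comm,
      mul_inv, mul_inv_cancel_left]
  · calc a.usub = (a : Rˣ)⁻¹ * a.usub * d.usub * ((a : Rˣ)⁻¹ * d.usub)⁻¹ := by
          rw [mul_right_comm (a : Rˣ)⁻¹, mul_inv_cancel_comm]
      _ = e.divSubOne * p.usub := by
          rw [WU.coe_divSubOne, h4, neg_mul, mul_right_comm (e : Rˣ), ← h5]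
          simp

lemma exists_of_isUnit_sub (h : IsUnit (((a : Rˣ) : R) - (b : Rˣ))) :
    ∃ c d e : WU R, FiveTerm a b c d e := by
  obtain ⟨v, hv⟩ := h
  have hc : (1 : R) - (b * (a : Rˣ)⁻¹ : Rˣ) = (v * (a : Rˣ)⁻¹ : Rˣ) := by
    push_cast
    rw [hv, sub_mul, Units.mul_inv]
  have he : (1 : R) - (a.usub * b.usub⁻¹ : Rˣ) = (v * b.usub⁻¹ : Rˣ) := by
    have h := Units.mul_inv b.usub
    push_cast [hv, WU.usub_coe] at *
    grind
  have hd : (1 : R) - (b * (a : Rˣ)⁻¹ * (a.usub * b.usub⁻¹) : Rˣ) =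
      (v * (a : Rˣ)⁻¹ * b.usub⁻¹ : Rˣ) := by
    have h1 := Units.mul_inv (a : Rˣ)
    have h2 := Units.mul_inv b.usub
    push_cast [hv, WU.usub_coe] at *
    grind
  exact ⟨.ofUnits _ _ hc, .ofUnits _ _ hd, .ofUnits _ _ he,
    by simp, by simp, by simp⟩

lemma exists_of_coe_eq_mul (h : (d : Rˣ) = c * e) : ∃ a b : WU R, FiveTerm a b c d e := by
  have hv := congrArg Units.val h
  have h1 := Units.mul_inv d.usub
  have ha : (1 : R) - (e.usub * d.usub⁻¹ : Rˣ) = (e * c.usub * d.usub⁻¹ : Rˣ) := by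
    push_cast [WU.usub_coe] at *
    grind
  have hb : (1 : R) - (c * (e.usub * d.usub⁻¹) : Rˣ) = (c.usub * d.usub⁻¹ : Rˣ) := by
    push_cast [WU.usub_coe] at *
    grind
  exact ⟨.ofUnits _ _ ha, .ofUnits _ _ hb, by simp, h, by simp [mul_assoc]⟩

end FiveTerm

section Presentation

variable (κ : Type*) [CommRing κ] {R : Type*} [CommRing R] {a b c d e : WU R}

lemma FiveTerm.rpt_relation (h : FiveTerm a b c d e) :
    rpt κ a - rpt κ b + gcl κ (a : Rˣ) • rpt κ c -
      (gcl κ (a : Rˣ) * gcl κ a.usub) • rpt κ d - gcl κ a.usub • rpt κ e = 0 := by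
  obtain ⟨h1, h2, h3⟩ := iff_cross_ratios.1 h
  rw [← gcl_uinvsub]
  exact congrArg (Kpsi κ R).mkQ ((Submodule.Quotient.mk_eq_zero (RPsub κ R)).2
    (Submodule.subset_span ⟨a, b, c, d, e, h1, h2, h3, rfl⟩))

/-- The coefficients are rewritten in terms of the ratios `c`, `d`, `e`, which are the quantities to
vary when two relations with the same `d` are compared. -/
lemma FiveTerm.rpt_relation_ratios (h : FiveTerm a b c d e) :
    rpt κ a - rpt κ b + (gcl κ e.usub * gcl κ d.usub) • rpt κ c -
      (gcl κ (e : Rˣ) * gcl κ e.usub * gcl κ c.usub) • rpt κ d -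
      (gcl κ (e : Rˣ) * gcl κ c.usub * gcl κ d.usub) • rpt κ e = 0 := by
  have ha := congrArg (gcl κ) h.a_mul_usub_d
  have hs := congrArg (gcl κ) h.usub_a_mul_usub_d
  rw [gcl_mul] at ha
  rw [gcl_mul, gcl_mul] at hs
  have hd := gcl_mul_self κ d.usub
  have ha' : gcl κ (a : Rˣ) = gcl κ e.usub * gcl κ d.usub := by grind
  have hs' : gcl κ a.usub = gcl κ (e : Rˣ) * gcl κ c.usub * gcl κ d.usub := by grind
  have had : gcl κ (a : Rˣ) * gcl κ a.usub = gcl κ (e : Rˣ) * gcl κ e.usub * gcl κ c.usub := by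
    grind
  have r := h.rpt_relation κ
  rwa [had, ha', hs'] at r

lemma rpt_add_rpt_winv (a : WU R) : rpt κ a + gcl κ (-1 : Rˣ) • rpt κ a.winv = 0 :=
  (Submodule.Quotient.mk_eq_zero (Kpsi κ R)).2 (Submodule.subset_span ⟨a, rfl⟩)

lemma rpt_winv (a : WU R) : rpt κ a.winv = -(gcl κ (-1 : Rˣ) • rpt κ a) := by
  linear_combination (norm := module)
    gcl κ (-1 : Rˣ) • rpt_add_rpt_winv κ a - gcl_mul_self κ (-1 : Rˣ) • rpt κ a.winv

lemma mkQ_Cexpr (a : WU R) :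
    (Kpsi κ R).mkQ (Cexpr κ a) = rpt κ a + gcl κ (-1 : Rˣ) • rpt κ a.oneSub := by
  have h : (Kpsi κ R).mkQ (psiOne κ a) = 0 := rpt_add_rpt_winv κ a
  rw [Cexpr, map_add, map_smul, h, smul_zero, add_zero]
  rfl

variable (R) in
lemma span_range_rpt : Submodule.span (GRing κ R) (Set.range (rpt κ (R := R))) = ⊤ := by
  have h : Submodule.span (GRing κ R) (Set.range (pregen κ (R := R))) = ⊤ := by
    have := (Finsupp.basisSingleOne (R := GRing κ R) (ι := WU R)).span_eq
    rwa [Finsupp.coe_basisSingleOne] at this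
  have := congrArg (Submodule.map ((Kpsi κ R).mkQ ∘ₗ (RPsub κ R).mkQ)) h
  rw [Submodule.map_span, Submodule.map_top, LinearMap.range_eq_top.2] at this
  · rwa [← Set.range_comp] at this
  · exact (Submodule.mkQ_surjective _).comp (Submodule.mkQ_surjective _)

variable {κ} {S M : Type*} [Ring S] [AddCommGroup M] [Module S M]

/-- The universal property of `\widetilde{RP}(R)`. It is stated for semilinear maps along a ring
homomorphism `σ` out of `R_R`, so that it also covers functoriality in `R`. -/
def RPt.lift (σ : GRing κ R →+* S) (q : WU R → M)
    (hfive : ∀ a b c d e : WU R, FiveTerm a b c d e →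
      q a - q b + σ (gcl κ (a : Rˣ)) • q c -
        σ (gcl κ (a : Rˣ) * gcl κ a.usub) • q d - σ (gcl κ a.usub) • q e = 0)
    (hinv : ∀ a : WU R, q a + σ (gcl κ (-1 : Rˣ)) • q a.winv = 0) : RPt κ R →ₛₗ[σ] M :=
  let L : preRP κ R →ₛₗ[σ] M :=
    Finsupp.lsum ℕ fun a => (LinearMap.toSpanSingleton S M (q a)).comp σ.toSemilinearMap
  have hL (a : WU R) : L (pregen κ a) = q a := by simp [L, pregen]
  (Kpsi κ R).liftQ ((RPsub κ R).liftQ L (Submodule.span_le.2 (by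
    rintro _ ⟨a, b, c, d, e, h1, h2, h3, rfl⟩
    have := hfive a b c d e (FiveTerm.iff_cross_ratios.2 ⟨h1, h2, h3⟩)
    rw [SetLike.mem_coe, LinearMap.mem_ker]
    simpa only [map_sub, map_add, map_smulₛₗ, hL, gcl_uinvsub] using this)))
  (Submodule.span_le.2 (by
    rintro _ ⟨a, rfl⟩
    have := hinv a
    rw [← hL, ← hL] at this
    rwa [SetLike.mem_coe, LinearMap.mem_ker, psiOne, map_add, map_smulₛₗ]))

@[simp]
lemma RPt.lift_rpt (σ : GRing κ R →+* S) (q : WU R → M) (hfive hinv) (a : WU R) :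
    RPt.lift σ q hfive hinv (rpt κ a) = q a := by
  change Finsupp.lsum ℕ _ (Finsupp.single a 1) = q a
  simp

end Presentation

section Functoriality

variable (κ : Type*) [CommRing κ] {A R : Type*} [CommRing A] [CommRing R] (f : A →+* R)

/-- The ring homomorphism `R_A → R_R` induced by a ring homomorphism `A → R`. -/
def GRing.map : GRing κ A →+* GRing κ R := MonoidAlgebra.mapDomainRingHom κ (sqMapRH f)

@[simp]
lemma GRing.map_gcl (u : Aˣ) :
    GRing.map κ f (gcl κ u) = gcl κ (Units.map (f : A →* R) u) := by
  rw [GRing.map, gcl, MonoidAlgebra.of_apply, MonoidAlgebra.mapDomainRingHom_apply,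
    MonoidAlgebra.mapDomain_single]
  rfl

lemma GRing.map_smul (c : κ) (x : GRing κ A) : GRing.map κ f (c • x) = c • GRing.map κ f x := by
  simp [GRing.map]

variable {f} in
lemma GRing.map_surjective (hu : Function.Surjective (Units.map (f : A →* R))) :
    Function.Surjective (GRing.map κ f) := fun x => by
  induction x using MonoidAlgebra.induction_on with
  | of g =>
    obtain ⟨v, rfl⟩ := QuotientGroup.mk_surjective g
    obtain ⟨u, rfl⟩ := hu v
    exact ⟨gcl κ u, GRing.map_gcl κ f u⟩
  | add x y hx hy =>
    obtain ⟨⟨x, rfl⟩, y, rfl⟩ := And.intro hx hy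
    exact ⟨x + y, map_add _ x y⟩
  | smul c x hx =>
    obtain ⟨x, rfl⟩ := hx
    exact ⟨c • x, GRing.map_smul κ f c x⟩

/-- The functorial map `\widetilde{RP}(A) → \widetilde{RP}(R)` induced by a ring homomorphism
`A → R`, semilinear along `R_A → R_R`. -/
def RPt.map : RPt κ A →ₛₗ[GRing.map κ f] RPt κ R :=
  RPt.lift (GRing.map κ f) (fun a => rpt κ (WU.mapRH f a))
    (fun a b c d e h => by
      simpa [WU.usub_mapRH] using (h.map f).rpt_relation κ)
    (fun a => by
      simpa [WU.mapRH_winv] using rpt_add_rpt_winv κ (WU.mapRH f a))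

@[simp]
lemma RPt.map_rpt (a : WU A) : RPt.map κ f (rpt κ a) = rpt κ (WU.mapRH f a) :=
  RPt.lift_rpt ..

variable {f} in
lemma RPt.map_surjective (hu : Function.Surjective (Units.map (f : A →* R)))
    (hW : Function.Surjective (WU.mapRH f)) : Function.Surjective (RPt.map κ f) := by
  have : RingHomSurjective (GRing.map κ f) := ⟨GRing.map_surjective κ hu⟩
  rw [← LinearMap.range_eq_top, eq_top_iff, ← span_range_rpt κ R, Submodule.span_le]
  rintro _ ⟨x, rfl⟩
  obtain ⟨a, rfl⟩ := hW x
  exact ⟨rpt κ a, RPt.map_rpt κ f a⟩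

variable {κ f} in
lemma RPt.eq_map_of_gcl_smul {ρ : RPt κ A →ₗ[κ] RPt κ R}
    (hρ : ∀ (w : Aˣ) (a : WU A),
      ρ (gcl κ w • rpt κ a) = gcl κ (Units.map (f : A →* R) w) • rpt κ (WU.mapRH f a))
    (x : RPt κ A) : ρ x = RPt.map κ f x := by
  have key (r : GRing κ A) (a : WU A) : ρ (r • rpt κ a) = RPt.map κ f (r • rpt κ a) := by
    induction r using MonoidAlgebra.induction_on with
    | of g =>
      obtain ⟨w, rfl⟩ := QuotientGroup.mk_surjective g
      change ρ (gcl κ w • rpt κ a) = RPt.map κ f (gcl κ w • rpt κ a)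
      rw [hρ, LinearMap.map_smulₛₗ, GRing.map_gcl, RPt.map_rpt]
    | add r s hr hs => simp only [add_smul, map_add, hr, hs]
    | smul c r hr =>
      rw [LinearMap.map_smulₛₗ (RPt.map κ f), GRing.map_smul, smul_assoc, smul_assoc, map_smul, hr,
        LinearMap.map_smulₛₗ]
  have hx : x ∈ Submodule.span (GRing κ A) (Set.range (rpt κ (R := A))) :=
    span_range_rpt κ A ▸ Submodule.mem_top
  obtain ⟨c, rfl⟩ := Finsupp.mem_span_range_iff_exists_finsupp.1 hx
  simp only [map_finsuppSum, key]

end Functoriality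

section LocalRing

open IsLocalRing

variable {B : Type*} [CommRing B] [IsLocalRing B]

variable (B) in
/-- The group `1 + m_B` of principal units of a local ring. -/
def principalUnits : Subgroup Bˣ := (Units.map (residue B : B →* ResidueField B)).ker

lemma mem_principalUnits_iff_residue {u : Bˣ} : u ∈ principalUnits B ↔ residue B (u : B) = 1 := by
  rw [principalUnits, MonoidHom.mem_ker, Units.ext_iff]
  rfl

lemma mem_principalUnits_iff_sub_mem {u : Bˣ} :
    u ∈ principalUnits B ↔ (1 : B) - (u : B) ∈ maximalIdeal B := by
  rw [mem_principalUnits_iff_residue, ← residue_eq_zero_iff, map_sub, map_one, sub_eq_zero, eq_comm]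

lemma units_map_residue_surjective :
    Function.Surjective (Units.map (residue B : B →* ResidueField B)) :=
  surjective_units_map_of_local_ringHom _ residue_surjective inferInstance

lemma exists_principalUnit_sqc_eq {g : SqCl B} (hg : sqMapRH (residue B) g = 1) :
    ∃ u ∈ principalUnits B, sqc u = g := by
  obtain ⟨w, rfl⟩ := QuotientGroup.mk_surjective g
  obtain ⟨v, hv⟩ := (QuotientGroup.eq_one_iff _).1 hg
  obtain ⟨v, rfl⟩ := units_map_residue_surjective v
  refine ⟨w * (v ^ 2)⁻¹, ?_, QuotientGroup.eq.2 ⟨v, by simp⟩⟩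
  rw [principalUnits, MonoidHom.mem_ker, map_mul, map_inv, map_pow, ← hv, powMonoidHom_apply,
    mul_inv_cancel]

namespace WU

lemma mapRH_residue_eq_iff {a b : WU B} :
    mapRH (residue B) a = mapRH (residue B) b ↔
      residue B ((a : Bˣ) : B) = residue B ((b : Bˣ) : B) :=
  ⟨fun h => congrArg (fun x : WU (ResidueField B) => ((x : (ResidueField B)ˣ) : ResidueField B)) h,
    fun h => ext h⟩

lemma isUnit_sub_of_mapRH_ne {a b : WU B} (h : mapRH (residue B) a ≠ mapRH (residue B) b) :
    IsUnit (((a : Bˣ) : B) - (b : Bˣ)) := by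
  rwa [← residue_ne_zero_iff_isUnit, map_sub, sub_ne_zero, Ne, ← mapRH_residue_eq_iff]

lemma exists_coe_eq {x : WU (ResidueField B)} {u : Bˣ}
    (h : residue B (u : B) = (x : (ResidueField B)ˣ)) :
    ∃ a : WU B, (a : Bˣ) = u ∧ mapRH (residue B) a = x := by
  refine ⟨⟨u, ?_⟩, rfl, ext h⟩
  rw [← residue_ne_zero_iff_isUnit, map_sub, map_one, h, ← usub_coe]
  exact x.usub.ne_zero

lemma mapRH_residue_surjective : Function.Surjective (mapRH (residue B)) := fun x => by
  obtain ⟨u, hu⟩ := units_map_residue_surjective (x : (ResidueField B)ˣ)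
  obtain ⟨a, -, ha⟩ := exists_coe_eq (congrArg Units.val hu)
  exact ⟨a, ha⟩

lemma exists_coe_eq_mul (a : WU B) {u : Bˣ} (hu : u ∈ principalUnits B) :
    ∃ a' : WU B, (a' : Bˣ) = a * u ∧ mapRH (residue B) a' = mapRH (residue B) a :=
  exists_coe_eq (by rw [Units.val_mul, map_mul, mem_principalUnits_iff_residue.1 hu, mul_one]; rfl)

lemma mapRH_residue_eq_iff_exists_mul {a a' : WU B} :
    mapRH (residue B) a' = mapRH (residue B) a ↔ ∃ u ∈ principalUnits B, (a' : Bˣ) = a * u := by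
  refine ⟨fun h => ⟨a' / a, ?_, (mul_div_cancel _ _).symm⟩, fun ⟨u, hu, h⟩ => Subtype.ext ?_⟩
  · rw [principalUnits, MonoidHom.mem_ker, map_div, div_eq_one]
    exact congrArg Subtype.val h
  · rw [coe_mapRH, h, map_mul, MonoidHom.mem_ker.1 hu, mul_one, coe_mapRH]

lemma exists_usub_eq_mul {a a' : WU B} (h : mapRH (residue B) a' = mapRH (residue B) a) :
    ∃ u ∈ principalUnits B, a'.usub = a.usub * u :=
  mapRH_residue_eq_iff_exists_mul (a := a.oneSub) (a' := a'.oneSub).1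
    (by rw [mapRH_oneSub, mapRH_oneSub, h])

lemma nontrivial_of_four_le_card {k : Type*} [Field k] (h : 4 ≤ Nat.card k ∨ Infinite k) :
    Nontrivial (WU k) := by
  classical
  have exists_notMem (s : Finset k) (hs : s.card < 4) : ∃ x, x ∉ s := by
    rcases h with h | h
    · have : Finite k := Nat.finite_of_card_ne_zero (by omega)
      have : Fintype k := Fintype.ofFinite k
      obtain ⟨x, -, hx⟩ := Finset.exists_mem_notMem_of_card_lt_card (t := Finset.univ) (s := s)
        (by rw [Finset.card_univ, ← Nat.card_eq_fintype_card]; omega)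
      exact ⟨x, hx⟩
    · exact Infinite.exists_notMem_finset s
  obtain ⟨x, hx⟩ := exists_notMem {0, 1} (Finset.card_le_two.trans_lt (by norm_num))
  obtain ⟨y, hy⟩ := exists_notMem {0, 1, x} (Finset.card_le_three.trans_lt (by norm_num))
  simp only [Finset.mem_insert, Finset.mem_singleton, not_or] at hx hy
  refine ⟨⟨.mk0 x hx.1, (sub_ne_zero.2 (Ne.symm hx.2)).isUnit⟩,
    ⟨.mk0 y hy.1, (sub_ne_zero.2 (Ne.symm hy.2.1)).isUnit⟩, fun h => hy.2.2 ?_⟩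
  exact (congrArg (fun z : WU k => ((z : kˣ) : k)) h).symm

end WU

lemma FiveTerm.exists_lift {a b c d e : WU (ResidueField B)} (h : FiveTerm a b c d e) :
    ∃ a' b' c' d' e' : WU B, FiveTerm a' b' c' d' e' ∧ WU.mapRH (residue B) a' = a ∧
      WU.mapRH (residue B) b' = b ∧ WU.mapRH (residue B) c' = c ∧
      WU.mapRH (residue B) d' = d ∧ WU.mapRH (residue B) e' = e := by
  obtain ⟨a, rfl⟩ := WU.mapRH_residue_surjective a
  obtain ⟨b, rfl⟩ := WU.mapRH_residue_surjective b
  have hab : WU.mapRH (residue B) a ≠ WU.mapRH (residue B) b := fun hab => by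
    have h1 := h.b_eq
    rw [hab, right_eq_mul] at h1
    exact c.usub.ne_zero (by rw [WU.usub_coe, h1, Units.val_one, sub_self])
  obtain ⟨c', d', e', h'⟩ := exists_of_isUnit_sub (WU.isUnit_sub_of_mapRH_ne hab)
  obtain ⟨hc, hd, he⟩ := (h'.map (residue B)).ratios_unique h
  exact ⟨a, b, c', d', e', h', rfl, rfl, hc, hd, he⟩

end LocalRing

section Residual

open IsLocalRing

variable {κ : Type*} [CommRing κ] {B : Type*} [CommRing B] [IsLocalRing B]
  {M : Type*} [AddCommGroup M] [Module (GRing κ B) M]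

/-- The linear maps out of `\widetilde{RP}(B)` that kill the generators of `L_B`: they identify
`[a]` and `[a']` when `a` and `a'` have the same residue, and kill `⟨⟨u⟩⟩C_B` for `u ∈ 1 + m_B`. -/
def IsResidual (π : RPt κ B →ₗ[GRing κ B] M) : Prop :=
  (∀ a a' : WU B, WU.mapRH (residue B) a = WU.mapRH (residue B) a' →
    π (rpt κ a) = π (rpt κ a')) ∧
  ∀ u ∈ principalUnits B, ∀ a : WU B,
    gcc κ u • (π (rpt κ a) + gcl κ (-1 : Bˣ) • π (rpt κ a.oneSub)) = 0

namespace IsResidual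

variable {π : RPt κ B →ₗ[GRing κ B] M} (hπ : IsResidual π) {u w : Bˣ}

include hπ in
lemma map_rpt_congr {a a' : WU B} (h : WU.mapRH (residue B) a = WU.mapRH (residue B) a') :
    π (rpt κ a) = π (rpt κ a') :=
  hπ.1 a a' h

include hπ in
lemma gcc_smul_oneSub (hw : w ∈ principalUnits B) (a : WU B) :
    gcc κ w • π (rpt κ a.oneSub) = -(gcl κ (-1 : Bˣ) • gcc κ w • π (rpt κ a)) := by
  have h := hπ.2 w hw a
  have hm := gcl_mul_self κ (-1 : Bˣ)
  linear_combination (norm := module)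
    gcl κ (-1 : Bˣ) • h - hm • (gcc κ w • π (rpt κ a.oneSub))

include hπ in
lemma gcc_smul_divSubOne (hw : w ∈ principalUnits B) (a : WU B) :
    gcc κ w • π (rpt κ a.divSubOne) = -(gcl κ (-1 : Bˣ) • gcc κ w • π (rpt κ a)) := by
  have h := hπ.gcc_smul_oneSub hw a.winv
  have hm := gcl_mul_self κ (-1 : Bˣ)
  rw [rpt_winv, map_neg, map_smul] at h
  rw [WU.divSubOne, rpt_winv, map_neg, map_smul]
  linear_combination (norm := module)
    -gcl κ (-1 : Bˣ) • h - hm • (gcl κ (-1 : Bˣ) • gcc κ w • π (rpt κ a))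

variable [Nontrivial (WU (ResidueField B))]

include hπ in
lemma gcl_smul_gcc_smul (hw : w ∈ principalUnits B) (a : WU B) :
    gcl κ (a : Bˣ) • gcc κ w • π (rpt κ a) = gcl κ (-1 : Bˣ) • gcc κ w • π (rpt κ a) := by
  obtain ⟨x, hx⟩ := exists_ne (WU.mapRH (residue B) a.winv)
  obtain ⟨c, rfl⟩ := WU.mapRH_residue_surjective x
  obtain ⟨p, d, e, h⟩ := FiveTerm.exists_of_isUnit_sub (WU.isUnit_sub_of_mapRH_ne hx.symm)
  have h1 := congrArg (fun x => gcc κ w • π x) (h.rpt_relation κ)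
  have h2 := congrArg (fun x => gcc κ w • π x) (h.winv_divSubOne.rpt_relation κ)
  have hd := hπ.gcc_smul_divSubOne hw d
  have he := hπ.gcc_smul_divSubOne hw e
  have sa := gcl_mul_self κ (a : Bˣ)
  have hs : gcl κ a.winv.usub = gcl κ (-1 : Bˣ) * gcl κ (a : Bˣ) * gcl κ a.usub := by
    rw [WU.usub_winv, ← neg_one_mul, gcl_mul, gcl_mul, gcl_inv, mul_assoc]
  simp only [rpt_winv, map_sub, map_add, map_neg, map_smul, map_zero, smul_zero, hs, WU.coe_winv,
    gcl_inv] at h1 h2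
  -- The coefficients agree only modulo `⟨u⟩² = 1`, which `module` cannot use.
  linear_combination (norm := skip) h1 + gcl κ (a : Bˣ) • h2
    + (gcl κ a.usub) • hd + (gcl κ (a : Bˣ) * gcl κ a.usub) • he
  match_scalars <;> grind

include hπ in
lemma gcl_usub_smul_gcc_smul (hw : w ∈ principalUnits B) (a : WU B) :
    gcl κ a.usub • gcc κ w • π (rpt κ a) = gcl κ (-1 : Bˣ) • gcc κ w • π (rpt κ a) := by
  have h := hπ.gcl_smul_gcc_smul hw a.oneSub
  rw [hπ.gcc_smul_oneSub hw, WU.coe_oneSub] at h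
  have hm := gcl_mul_self κ (-1 : Bˣ)
  generalize gcc κ w • π (rpt κ a) = x at h ⊢
  linear_combination (norm := module)
    -gcl κ (-1 : Bˣ) • h - hm • (gcl κ a.usub • x - gcl κ (-1 : Bˣ) • x)

include hπ in
lemma gcc_smul_gcc_smul (hu : u ∈ principalUnits B) (hw : w ∈ principalUnits B) (a : WU B) :
    gcc κ u • gcc κ w • π (rpt κ a) = 0 := by
  obtain ⟨a', ha', hres⟩ := a.exists_coe_eq_mul hu
  have h := hπ.gcl_smul_gcc_smul hw a
  have h' := hπ.gcl_smul_gcc_smul hw a'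
  rw [hπ.map_rpt_congr hres, ha', gcl_mul] at h'
  have sa := gcl_mul_self κ (a : Bˣ)
  rw [gcc]
  linear_combination (norm := module)
    gcl κ (a : Bˣ) • (h' - h) - sa • ((gcl κ u - 1) • gcc κ w • π (rpt κ a))

include hπ in
lemma gcc_smul_add_self (hw : w ∈ principalUnits B) (a : WU B) :
    gcc κ w • π (rpt κ a) + gcc κ w • π (rpt κ a) = 0 := by
  have h := hπ.gcc_smul_gcc_smul hw hw a
  have sw := gcl_mul_self κ w
  rw [gcc] at h ⊢
  linear_combination (norm := module) -h + sw • π (rpt κ a)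

include hπ in
lemma gcc_mul_smul (hu : u ∈ principalUnits B) (hw : w ∈ principalUnits B) (a : WU B) :
    gcc κ (u * w) • π (rpt κ a) = gcc κ u • π (rpt κ a) + gcc κ w • π (rpt κ a) := by
  have h := hπ.gcc_smul_gcc_smul hu hw a
  simp only [gcc, gcl_mul] at h ⊢
  linear_combination (norm := module) h

include hπ in
/-- The difference of two five-term relations with the same `d` and the same residues: `π[a]` and
`π[b]` cancel. -/
lemma gcc_smul_relation {a b c d e a' b' c' e' : WU B} {y α β : Bˣ} (h : FiveTerm a b c d e)
    (h' : FiveTerm a' b' c' d e') (hc : WU.mapRH (residue B) c' = WU.mapRH (residue B) c)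
    (he : WU.mapRH (residue B) e' = WU.mapRH (residue B) e) (hy : (e' : Bˣ) = e * y)
    (hα : e'.usub = e.usub * α) (hβ : c'.usub = c.usub * β) (hym : y ∈ principalUnits B)
    (hβm : β ∈ principalUnits B) :
    (gcl κ d.usub * gcl κ e.usub) • gcc κ α • π (rpt κ c) -
      (gcl κ (e : Bˣ) * gcl κ e.usub * gcl κ c.usub) • gcc κ (y * (α * β)) • π (rpt κ d) -
      (gcl κ (-1 : Bˣ) * gcl κ d.usub * gcl κ c.usub) •
        (gcc κ y • π (rpt κ e) + gcc κ β • π (rpt κ e)) = 0 := by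
  have hres := h'.map (residue B)
  rw [hc, he] at hres
  obtain ⟨ha, hb⟩ := hres.eq_of_ratios_eq (h.map (residue B))
  have r := congrArg π (h.rpt_relation_ratios κ)
  have r' := congrArg π (h'.rpt_relation_ratios κ)
  simp only [map_sub, map_add, map_smul, map_zero] at r r'
  rw [hπ.map_rpt_congr ha, hπ.map_rpt_congr hb, hπ.map_rpt_congr hc,
    hπ.map_rpt_congr he, hy, hα, hβ] at r'
  have hyβ := hπ.gcl_smul_gcc_smul (mul_mem hym hβm) e
  rw [← hπ.gcc_mul_smul hym hβm]
  simp only [gcc, gcl_mul] at r' hyβ ⊢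
  linear_combination (norm := module) r' - r + (gcl κ d.usub * gcl κ c.usub) • hyβ

include hπ in
lemma gcl_usub_mul_smul_gcc_smul_of_coe_eq_mul {c d e : WU B} (hd : (d : Bˣ) = c * e) {y : Bˣ}
    (hy : y ∈ principalUnits B) :
    (gcl κ (-1 : Bˣ) * gcl κ e.usub * gcl κ d.usub) • gcc κ y • π (rpt κ c) =
      (gcl κ c.usub * gcl κ d.usub) • gcc κ y • π (rpt κ e) := by
  obtain ⟨e', hey, he⟩ := e.exists_coe_eq_mul hy
  obtain ⟨c', hcy, hc⟩ := c.exists_coe_eq_mul (inv_mem hy)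
  obtain ⟨α, hα, heα⟩ := WU.exists_usub_eq_mul he
  obtain ⟨β, hβ, hcβ⟩ := WU.exists_usub_eq_mul hc
  have hd' : (d : Bˣ) = c' * e' := by rw [hcy, hey, mul_mul_mul_comm, inv_mul_cancel, mul_one, hd]
  obtain ⟨_, _, h₁⟩ := FiveTerm.exists_of_coe_eq_mul hd
  obtain ⟨_, _, h₁'⟩ := FiveTerm.exists_of_coe_eq_mul hd'
  obtain ⟨_, _, h₂⟩ := FiveTerm.exists_of_coe_eq_mul (hd.trans (mul_comm _ _))
  obtain ⟨_, _, h₂'⟩ := FiveTerm.exists_of_coe_eq_mul (hd'.trans (mul_comm _ _))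
  have r₁ := hπ.gcc_smul_relation h₁ h₁' hc he hey heα hcβ hy hβ
  have r₂ := hπ.gcc_smul_relation h₂ h₂' he hc hcy hcβ heα (inv_mem hy) hα
  have gcc_inv (v : Bˣ) : gcc κ (y⁻¹ * v) = gcc κ (y * v) := by
    rw [gcc, gcc, gcl_mul, gcl_mul, gcl_inv]
  rw [gcc_inv, mul_comm β, ← mul_one y⁻¹, gcc_inv, mul_one] at r₂
  have hce := hπ.gcl_smul_gcc_smul (mul_mem hy (mul_mem hα hβ)) d
  rw [hd, gcl_mul] at hce
  have se := gcl_mul_self κ (e : Bˣ)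
  have sm := gcl_mul_self κ (-1 : Bˣ)
  linear_combination (norm := module)
    gcl κ (-1 : Bˣ) • r₁ - r₂
    - (gcl κ e.usub * gcl κ c.usub) • (gcl κ (e : Bˣ) • hce
        - se • (gcl κ (c : Bˣ) • gcc κ (y * (α * β)) • π (rpt κ d)))
    + sm • ((gcl κ d.usub * gcl κ c.usub) • (gcc κ y • π (rpt κ e) + gcc κ β • π (rpt κ e)))
    - (gcl κ (-1 : Bˣ) * gcl κ e.usub * gcl κ d.usub) • hπ.gcc_smul_add_self hα c
    + (gcl κ c.usub * gcl κ d.usub) • hπ.gcc_smul_add_self hβ e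

include hπ in
lemma gcc_smul_eq_of_coe_eq_mul {c d e : WU B} (hd : (d : Bˣ) = c * e) {y : Bˣ}
    (hy : y ∈ principalUnits B) :
    gcc κ y • π (rpt κ e) = gcl κ (-1 : Bˣ) • gcc κ y • π (rpt κ c) := by
  have key := hπ.gcl_usub_mul_smul_gcc_smul_of_coe_eq_mul hd hy
  have hc' := hπ.gcl_usub_smul_gcc_smul hy c
  have he' := hπ.gcl_usub_smul_gcc_smul hy e
  generalize gcc κ y • π (rpt κ c) = x, gcc κ y • π (rpt κ e) = x' at key hc' he' ⊢
  have sm := gcl_mul_self κ (-1 : Bˣ)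
  have sC := gcl_mul_self κ c.usub
  have sD := gcl_mul_self κ d.usub
  have sE := gcl_mul_self κ e.usub
  linear_combination (norm := skip)
    hc' - gcl κ (-1 : Bˣ) • he' -
      (gcl κ (-1 : Bˣ) * gcl κ d.usub * gcl κ e.usub * gcl κ c.usub) • key
  match_scalars <;> grind

include hπ in
lemma gcc_smul_eq_gcl_smul (hw : w ∈ principalUnits B) (a b : WU B) :
    gcc κ w • π (rpt κ b) = gcl κ (-1 : Bˣ) • gcc κ w • π (rpt κ a) := by
  by_cases hab : WU.mapRH (residue B) b = WU.mapRH (residue B) a.winv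
  · rw [hπ.map_rpt_congr hab, rpt_winv, map_neg, map_smul]
    linear_combination (norm := module) -gcl κ (-1 : Bˣ) • hπ.gcc_smul_add_self hw a
  · obtain ⟨v, hv⟩ := WU.isUnit_sub_of_mapRH_ne hab
    have h : (1 : B) - (a * b : Bˣ) = (-(a * v) : Bˣ) := by
      push_cast
      rw [hv, mul_sub, WU.coe_winv, Units.mul_inv, neg_sub]
    exact hπ.gcc_smul_eq_of_coe_eq_mul (d := .ofUnits _ _ h) rfl hw

include hπ in
lemma gcc_smul_map_rpt (hw : w ∈ principalUnits B) (a : WU B) : gcc κ w • π (rpt κ a) = 0 := by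
  have hconst (b : WU B) : gcc κ w • π (rpt κ b) = gcc κ w • π (rpt κ a) := by
    rw [hπ.gcc_smul_eq_gcl_smul hw a, ← hπ.gcc_smul_eq_gcl_smul hw a a]
  obtain ⟨x, hx⟩ := exists_ne (WU.mapRH (residue B) a)
  obtain ⟨b, rfl⟩ := WU.mapRH_residue_surjective x
  obtain ⟨c, d, e, h⟩ := FiveTerm.exists_of_isUnit_sub (WU.isUnit_sub_of_mapRH_ne hx.symm)
  have r := congrArg (fun x => gcc κ w • π x) (h.rpt_relation κ)
  have hm := hπ.gcc_smul_eq_gcl_smul hw a a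
  have ha := hπ.gcl_smul_gcc_smul hw a
  have hs := hπ.gcl_usub_smul_gcc_smul hw a
  simp only [map_sub, map_add, map_smul, map_zero, smul_zero, smul_sub, smul_add,
    smul_comm (gcc κ w), hconst, mul_smul] at r
  rw [hs, ha, ← hm, ha, ← hm] at r
  linear_combination (norm := module) -r

include hπ in
lemma gcl_smul_map (hw : w ∈ principalUnits B) (x : RPt κ B) : gcl κ w • π x = π x := by
  have h : gcc κ w • π = 0 := LinearMap.ext_on_range (span_range_rpt κ B) (hπ.gcc_smul_map_rpt hw)
  rw [← sub_eq_zero, ← one_smul (GRing κ B) (π x), ← mul_smul, mul_one, ← sub_smul]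
  exact LinearMap.congr_fun h x

include hπ in
lemma smul_eq_zero (hsurj : Function.Surjective π) {r : GRing κ B}
    (hr : GRing.map κ (residue B) r = 0) (m : M) : r • m = 0 := by
  refine smul_eq_zero_of_mapDomainRingHom_eq_zero (fun g hg m => ?_) hr m
  obtain ⟨x, rfl⟩ := hsurj m
  obtain ⟨u, hu, rfl⟩ := exists_principalUnit_sqc_eq hg
  exact hπ.gcl_smul_map hu x

include hπ in
lemma map_eq_zero (hsurj : Function.Surjective π) {x : RPt κ B}
    (hx : RPt.map κ (residue B) x = 0) : π x = 0 := by
  have hmap := GRing.map_surjective κ (units_map_residue_surjective (B := B))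
  let φ : GRing κ (ResidueField B) →+* AddMonoid.End M :=
    RingHom.liftOfSurjective (GRing.map κ (residue B)) hmap
      ⟨Module.toAddMonoidEnd (GRing κ B) M, fun r hr =>
        AddMonoidHom.ext (hπ.smul_eq_zero hsurj hr)⟩
  have hφ (r : GRing κ B) (m : M) : φ (GRing.map κ (residue B) r) • m = r • m :=
    DFunLike.congr_fun (RingHom.liftOfRightInverse_comp_apply _ _ _ _ r) m
  let q (x : WU (ResidueField B)) : M :=
    π (rpt κ (Function.surjInv WU.mapRH_residue_surjective x))
  have hq (a : WU B) : q (WU.mapRH (residue B) a) = π (rpt κ a) :=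
    hπ.map_rpt_congr (Function.surjInv_eq _ _)
  let θ : RPt κ (ResidueField B) →ₛₗ[φ] M := RPt.lift φ q
    (fun _ _ _ _ _ h => by
      obtain ⟨a, b, c, d, e, h', rfl, rfl, rfl, rfl, rfl⟩ := h.exists_lift
      simpa only [hq, WU.coe_mapRH, WU.usub_mapRH, ← GRing.map_gcl, ← map_mul, hφ, map_sub, map_add,
        map_smul, map_zero] using congrArg π (h'.rpt_relation κ))
    (fun x => by
      obtain ⟨a, rfl⟩ := WU.mapRH_residue_surjective x
      have hneg : (-1 : (ResidueField B)ˣ) = Units.map (residue B : B →* ResidueField B) (-1) :=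
        Units.ext (by simp)
      simpa only [hq, ← WU.mapRH_winv, hneg, ← GRing.map_gcl, hφ, map_add, map_smul, map_zero] using
        congrArg π (rpt_add_rpt_winv κ a))
  have hθ (y : RPt κ B) : θ (RPt.map κ (residue B) y) = π y := by
    induction span_range_rpt κ B ▸ Submodule.mem_top (x := y) using Submodule.span_induction with
    | mem y hy =>
      obtain ⟨a, rfl⟩ := hy
      rw [RPt.map_rpt, RPt.lift_rpt, hq]
    | zero => simp only [map_zero]
    | add y z _ _ hy hz => simp only [map_add, hy, hz]
    | smul r y _ hy => rw [LinearMap.map_smulₛₗ, LinearMap.map_smulₛₗ, hφ, hy, map_smul]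
  rw [← hθ, hx, map_zero]

end IsResidual

end Residual

section Reduction

open IsLocalRing

variable {κ : Type*} [CommRing κ] {B : Type*} [CommRing B] [IsLocalRing B] {C : RP κ B}

/-- The submodule `L_B` of `\widetilde{RP}(B)` generated by the elements `[au] - [a]` and `⟨⟨u⟩⟩C`
for `a ∈ W_B` and `u ∈ 1 + m_B`. The constant `C = C_B` is a parameter. -/
def reductionKer (C : RP κ B) : Submodule (GRing κ B) (RPt κ B) :=
  Submodule.span (GRing κ B)
    ({x | ∃ (a au : WU B) (u : Bˣ), (1 : B) - (u : B) ∈ maximalIdeal B ∧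
        (au : Bˣ) = (a : Bˣ) * u ∧ x = rpt κ au - rpt κ a} ∪
      {x | ∃ u : Bˣ, (1 : B) - (u : B) ∈ maximalIdeal B ∧
        x = Submodule.Quotient.mk (gcc κ u • C)})

lemma reductionKer_le_ker_map : reductionKer C ≤ LinearMap.ker (RPt.map κ (residue B)) := by
  refine Submodule.span_le.2 ?_
  rintro _ (⟨a, au, u, hu, hau, rfl⟩ | ⟨u, hu, rfl⟩) <;>
    rw [← mem_principalUnits_iff_sub_mem] at hu <;> rw [SetLike.mem_coe, LinearMap.mem_ker]
  · rw [map_sub, RPt.map_rpt, RPt.map_rpt, WU.mapRH_residue_eq_iff_exists_mul.2 ⟨u, hu, hau⟩,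
      sub_self]
  · have hu' : GRing.map κ (residue B) (gcc κ u) = 0 := by
      rw [gcc, map_sub, map_one, GRing.map_gcl, MonoidHom.mem_ker.1 hu, gcl_one, sub_self]
    rw [Submodule.Quotient.mk_smul, LinearMap.map_smulₛₗ, hu', zero_smul]

lemma isResidual_mkQ_reductionKer (hC : ∀ a₀ : WU B, C = Cexpr κ a₀) :
    IsResidual (reductionKer C).mkQ := by
  refine ⟨fun a a' h => ?_, fun u hu a => ?_⟩
  · obtain ⟨u, hu, ha⟩ := WU.mapRH_residue_eq_iff_exists_mul.1 h
    exact (Submodule.Quotient.eq _).2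
      (Submodule.subset_span (.inl ⟨a', a, u, mem_principalUnits_iff_sub_mem.1 hu, ha, rfl⟩))
  · rw [← map_smul, ← map_add, ← mkQ_Cexpr, ← hC a, ← map_smul]
    exact (Submodule.Quotient.mk_eq_zero _).2
      (Submodule.subset_span (.inr ⟨u, mem_principalUnits_iff_sub_mem.1 hu, rfl⟩))

theorem stmt3_general
    (hcard : 4 ≤ Nat.card (ResidueField B) ∨ Infinite (ResidueField B))
    (hC : ∀ a₀ : WU B, C = Cexpr κ a₀) {ρ : RPt κ B →ₗ[κ] RPt κ (ResidueField B)}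
    (hρ : ∀ (w : Bˣ) (a : WU B), ρ (gcl κ w • rpt κ a) =
      gcl κ (Units.map (residue B : B →* ResidueField B) w) • rpt κ (WU.mapRH (residue B) a)) :
    Function.Surjective ρ ∧ ∀ x : RPt κ B, ρ x = 0 ↔ x ∈ reductionKer C := by
  have : Nontrivial (WU (ResidueField B)) := WU.nontrivial_of_four_le_card hcard
  have hρ_map : ∀ x, ρ x = RPt.map κ (residue B) x := RPt.eq_map_of_gcl_smul hρ
  constructor
  · rw [funext hρ_map]
    exact RPt.map_surjective κ units_map_residue_surjective WU.mapRH_residue_surjective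
  · intro x
    rw [hρ_map]
    refine ⟨fun hx => ?_, fun hx => reductionKer_le_ker_map hx⟩
    rw [← Submodule.Quotient.mk_eq_zero]
    exact (isResidual_mkQ_reductionKer hC).map_eq_zero (Submodule.mkQ_surjective _) hx

end Reduction

/-- Lemma on the reduction map.
Let `B` be a local ring with maximal ideal `m_B` and residue field `k` with at least 5
elements.  Let `L_B` be the `R_B`-submodule of `\widetilde{RP}(B)` generated by the
elements `[au] - [a]` and `⟨⟨u⟩⟩C_B` for `a ∈ W_B`, `u ∈ 1 + m_B`.  Then there is a
short exact sequence of `R_B`-modules `0 → L_B → \widetilde{RP}(B) → \widetilde{RP}(k) → 0`,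
where the right-hand map is the functorial map `ρ` induced by the reduction `B ↠ k`
(characterized by `ρ(⟨w⟩[a]) = ⟨w̄⟩[ā]`);  i.e. `ρ` is surjective with kernel exactly `L_B`. -/
theorem stmt3
    (B : Type) [CommRing B] [IsLocalRing B]
    (hcard : 5 ≤ Nat.card (IsLocalRing.ResidueField B) ∨
      Infinite (IsLocalRing.ResidueField B))
    (C : RP ℤ B) (hC : ∀ a₀ : WU B, C = Cexpr ℤ a₀)
    (LB : Submodule (GRing ℤ B) (RPt ℤ B))
    (hLB : LB = Submodule.span (GRing ℤ B)
      ({x | ∃ (a au : WU B) (u : Bˣ), ((1 : B) - (u : B)) ∈ IsLocalRing.maximalIdeal B ∧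
          (au : Bˣ) = (a : Bˣ) * u ∧ x = rpt ℤ au - rpt ℤ a} ∪
       {x | ∃ u : Bˣ, ((1 : B) - (u : B)) ∈ IsLocalRing.maximalIdeal B ∧
          x = Submodule.Quotient.mk (gcc ℤ u • C)}))
    (ρ : RPt ℤ B →+ RPt ℤ (IsLocalRing.ResidueField B))
    (hρ : ∀ (w : Bˣ) (a : WU B),
      ρ (Submodule.Quotient.mk (gcl ℤ w • rp ℤ a)) =
        Submodule.Quotient.mk
          (gcl ℤ (Units.map ((IsLocalRing.residue B) : B →* IsLocalRing.ResidueField B) w) •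
            rp ℤ (WU.mapRH (IsLocalRing.residue B) a))) :
    Function.Surjective ρ ∧ ∀ x : RPt ℤ B, (ρ x = 0 ↔ x ∈ LB) := by
  subst hLB
  exact stmt3_general (hcard.imp_left (by omega)) hC (ρ := ρ.toIntLinearMap) hρ
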